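/- For every positive integer n and every bilinear form A : ℂ^n × ℂ^n → ℂ, one has (∑_{i=1}^n ∑_{j=1}^n |A(e_i, e_j)|^{4/3})^{3/4} ≤ √2 · sup_{x, y ∈ 𝔻^n} |A(x, y)|. (Littlewood's 4/3 inequality.) -/

import Mathlib

open Finset

/-- The four fourth roots of unity. -/
noncomputable def lwU : Fin 4 → ℂ := ![1, -1, Complex.I, -Complex.I]

lemma lwU_norm (c : Fin 4) : ‖lwU c‖ = 1 := by
  fin_cases c <;> simp [lwU]

lemma lw_step2 (a s : ℂ) : ∑ c : Fin 4, ‖a * lwU c + s‖ ^ 2 = 4 * ‖a‖ ^ 2 + 4 * ‖s‖ ^ 2 := by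
  simp only [Fin.sum_univ_four, Complex.sq_norm, Complex.normSq_apply]
  simp [lwU]
  ring

lemma lw_step4 (a s : ℂ) : ∑ c : Fin 4, ‖a * lwU c + s‖ ^ 4
    = 4 * ‖a‖ ^ 4 + 16 * (‖a‖ ^ 2 * ‖s‖ ^ 2) + 4 * ‖s‖ ^ 4 := by
  have h : ∀ z : ℂ, ‖z‖ ^ 4 = (‖z‖ ^ 2) ^ 2 := fun z => by ring
  simp only [Fin.sum_univ_four, h, Complex.sq_norm, Complex.normSq_apply]
  simp [lwU]
  ring

lemma lw_sum_cons (n : ℕ) (g : (Fin (n + 1) → Fin 4) → ℝ) :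
    ∑ ω, g ω = ∑ ω : Fin n → Fin 4, ∑ c : Fin 4, g (Fin.cons c ω) := by
  rw [← (Fin.consEquiv (fun _ : Fin (n + 1) => Fin 4)).sum_comp g, Fintype.sum_prod_type,
    Finset.sum_comm]
  rfl

lemma lw_E2 (n : ℕ) (a : Fin n → ℂ) :
    ∑ ω : Fin n → Fin 4, ‖∑ j, a j * lwU (ω j)‖ ^ 2 = 4 ^ n * ∑ j, ‖a j‖ ^ 2 := by
  induction n with
  | zero => simp
  | succ n ih =>
    rw [lw_sum_cons]
    simp only [Fin.sum_univ_succ (n := n), Fin.cons_zero, Fin.cons_succ]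
    simp only [lw_step2]
    rw [Finset.sum_add_distrib, ← Finset.mul_sum, ← Finset.mul_sum, ih (fun j => a j.succ)]
    simp
    ring

lemma lw_E4 (n : ℕ) (a : Fin n → ℂ) :
    ∑ ω : Fin n → Fin 4, ‖∑ j, a j * lwU (ω j)‖ ^ 4 ≤ 4 ^ n * (2 * (∑ j, ‖a j‖ ^ 2) ^ 2) := by
  induction n with
  | zero => simp
  | succ n ih =>
    rw [lw_sum_cons]
    simp only [Fin.sum_univ_succ (n := n), Fin.cons_zero, Fin.cons_succ]
    simp only [lw_step4]
    rw [Finset.sum_add_distrib, Finset.sum_add_distrib, ← Finset.mul_sum, ← Finset.mul_sum,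
      ← Finset.mul_sum, ← Finset.mul_sum, lw_E2 n (fun j => a j.succ)]
    have := ih (fun j => a j.succ)
    set S := ∑ j : Fin n, ‖a j.succ‖ ^ 2
    simp only [Finset.sum_const, Finset.card_univ, Fintype.card_pi, Fintype.card_fin,
      Finset.prod_const, nsmul_eq_mul]
    push_cast
    have h4 : (0 : ℝ) ≤ 4 ^ n * ‖a 0‖ ^ 4 := by positivity
    rw [pow_succ (4 : ℝ) n]
    nlinarith

lemma lw_pt (s t : ℝ) (hs : 0 ≤ s) (ht : 0 ≤ t) :
    6 * s ^ 2 * t ^ 2 - t ^ 4 ≤ 4 * √2 * s ^ 3 * t := by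
  have h2 : √2 ^ 2 = 2 := by simp
  have h0 : 0 ≤ √2 := by positivity
  have : 4 * √2 * s ^ 3 * t - (6 * s ^ 2 * t ^ 2 - t ^ 4)
      = t * ((t - √2 * s) ^ 2 * (t + 2 * √2 * s)) := by
    linear_combination (3 * t ^ 2 * s ^ 2 - 2 * √2 * s ^ 3 * t) * h2
  have : 0 ≤ t * ((t - √2 * s) ^ 2 * (t + 2 * √2 * s)) := by positivity
  linarith

lemma lw_khin (n : ℕ) (a : Fin n → ℂ) :
    4 ^ n * √(∑ j, ‖a j‖ ^ 2) ≤ √2 * ∑ ω : Fin n → Fin 4, ‖∑ j, a j * lwU (ω j)‖ := by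
  set s := √(∑ j, ‖a j‖ ^ 2) with hs
  have hs2 : s ^ 2 = ∑ j, ‖a j‖ ^ 2 := Real.sq_sqrt (by positivity)
  have hs0 : 0 ≤ s := by positivity
  rcases hs0.eq_or_lt with h | hpos
  · rw [← h]; simp; positivity
  have h1 : ∑ ω : Fin n → Fin 4, (6 * s ^ 2 * ‖∑ j, a j * lwU (ω j)‖ ^ 2
      - ‖∑ j, a j * lwU (ω j)‖ ^ 4)
      ≤ ∑ ω : Fin n → Fin 4, 4 * √2 * s ^ 3 * ‖∑ j, a j * lwU (ω j)‖ :=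
    Finset.sum_le_sum fun ω _ => lw_pt s _ hs0 (norm_nonneg _)
  rw [Finset.sum_sub_distrib, ← Finset.mul_sum, ← Finset.mul_sum, lw_E2] at h1
  have h4 := lw_E4 n a
  rw [← hs2] at h1 h4
  have h3 : 0 < 4 * s ^ 3 := by positivity
  refine le_of_mul_le_mul_left ?_ h3
  nlinarith

lemma lw_avg (n : ℕ) (a : Fin n → Fin n → ℂ) (M : ℝ)
    (h : ∀ w : Fin n → ℂ, (∀ k, ‖w k‖ ≤ 1) → ∑ i, ‖∑ j, a i j * w j‖ ≤ M) :
    ∑ i, √(∑ j, ‖a i j‖ ^ 2) ≤ √2 * M := by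
  have h4 : (0 : ℝ) < 4 ^ n := by positivity
  refine le_of_mul_le_mul_left ?_ h4
  calc (4 : ℝ) ^ n * ∑ i, √(∑ j, ‖a i j‖ ^ 2) = ∑ i, 4 ^ n * √(∑ j, ‖a i j‖ ^ 2) := by
        rw [Finset.mul_sum]
    _ ≤ ∑ i, √2 * ∑ ω : Fin n → Fin 4, ‖∑ j, a i j * lwU (ω j)‖ :=
        Finset.sum_le_sum fun i _ => lw_khin n (a i)
    _ = √2 * ∑ ω : Fin n → Fin 4, ∑ i, ‖∑ j, a i j * lwU (ω j)‖ := by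
        rw [← Finset.mul_sum, Finset.sum_comm]
    _ ≤ √2 * ∑ ω : Fin n → Fin 4, M := by
        gcongr with ω
        exact h _ fun k => (lwU_norm _).le
    _ = 4 ^ n * (√2 * M) := by simp; ring

lemma lw_dual (n : ℕ) (c : Fin n → ℂ) (M : ℝ)
    (h : ∀ z : Fin n → ℂ, (∀ k, ‖z k‖ ≤ 1) → ‖∑ i, z i * c i‖ ≤ M) : ∑ i, ‖c i‖ ≤ M := by
  have h1 := h (fun i => (starRingEnd ℂ) (c i) / ‖c i‖) (fun k => by
    by_cases hk : c k = 0
    · simp [hk]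
    · have : ‖c k‖ ≠ 0 := by simpa using hk
      simp [div_self this])
  have h2 : ∑ i, (starRingEnd ℂ) (c i) / ‖c i‖ * c i = ((∑ i, ‖c i‖ : ℝ) : ℂ) := by
    push_cast
    refine Finset.sum_congr rfl fun i _ => ?_
    by_cases hk : c i = 0
    · simp [hk]
    · have : (‖c i‖ : ℂ) ≠ 0 := by simpa using hk
      rw [div_mul_eq_mul_div, Complex.conj_mul']
      field_simp
  rw [h2, Complex.norm_real, Real.norm_of_nonneg (by positivity)] at h1
  exact h1

lemma lw_minkowski (n : ℕ) (b : Fin n → Fin n → ℝ) :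
    ∑ i, (∑ j, b i j) ^ 2 ≤ (∑ j, √(∑ i, b i j ^ 2)) ^ 2 := by
  calc ∑ i, (∑ j, b i j) ^ 2 = ∑ j, ∑ k, ∑ i, b i j * b i k := by
        simp only [sq, Finset.sum_mul_sum]
        rw [Finset.sum_comm]
        refine Finset.sum_congr rfl fun j _ => Finset.sum_comm
    _ ≤ ∑ j, ∑ k, √(∑ i, b i j ^ 2) * √(∑ i, b i k ^ 2) :=
        Finset.sum_le_sum fun j _ => Finset.sum_le_sum fun k _ =>
          Real.sum_mul_le_sqrt_mul_sqrt _ _ _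
    _ = _ := by rw [sq, Finset.sum_mul_sum]

lemma lw_holder (n : ℕ) (f g : Fin n → ℝ) (hf : ∀ i, 0 ≤ f i) (hg : ∀ i, 0 ≤ g i) :
    ∑ i, f i ^ ((1 : ℝ) / 3) * g i ^ ((2 : ℝ) / 3)
      ≤ (∑ i, f i) ^ ((1 : ℝ) / 3) * (∑ i, g i) ^ ((2 : ℝ) / 3) := by
  have hpq : Real.HolderConjugate 3 (3 / 2) := by
    rw [Real.holderConjugate_iff]; norm_num
  have := Real.inner_le_Lp_mul_Lq_of_nonneg Finset.univ hpq
    (f := fun i => f i ^ ((1 : ℝ) / 3)) (g := fun i => g i ^ ((2 : ℝ) / 3))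
    (fun i _ => by have := hf i; positivity) (fun i _ => by have := hg i; positivity)
  have e1 : ∀ i, (f i ^ ((1 : ℝ) / 3)) ^ (3 : ℝ) = f i := fun i => by
    rw [← Real.rpow_mul (hf i)]; norm_num
  have e2 : ∀ i, (g i ^ ((2 : ℝ) / 3)) ^ (3 / 2 : ℝ) = g i := fun i => by
    rw [← Real.rpow_mul (hg i)]; norm_num
  simp only [e1, e2] at this
  convert this using 3
  norm_num

lemma lw_mix (n : ℕ) (b : Fin n → Fin n → ℝ) (hb : ∀ i j, 0 ≤ b i j) (K : ℝ)
    (hR : ∑ i, √(∑ j, b i j ^ 2) ≤ K) (hC : ∑ j, √(∑ i, b i j ^ 2) ≤ K) :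
    (∑ i, ∑ j, b i j ^ ((4 : ℝ) / 3)) ^ ((3 : ℝ) / 4) ≤ K := by
  have hK : 0 ≤ K := le_trans (by positivity) hR
  have hS : ∀ i, 0 ≤ ∑ j, b i j := fun i => Finset.sum_nonneg fun j _ => hb i j
  have key : ∑ i, ∑ j, b i j ^ ((4 : ℝ) / 3) ≤ K ^ ((4 : ℝ) / 3) := by
    calc ∑ i, ∑ j, b i j ^ ((4 : ℝ) / 3)
        = ∑ i, ∑ j, (b i j ^ 2) ^ ((1 : ℝ) / 3) * (b i j) ^ ((2 : ℝ) / 3) := by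
          refine Finset.sum_congr rfl fun i _ => Finset.sum_congr rfl fun j _ => ?_
          rw [← Real.rpow_natCast, ← Real.rpow_mul (hb i j),
            ← Real.rpow_add_of_nonneg (hb i j) (by norm_num) (by norm_num)]
          norm_num
      _ ≤ ∑ i, (∑ j, b i j ^ 2) ^ ((1 : ℝ) / 3) * (∑ j, b i j) ^ ((2 : ℝ) / 3) :=
          Finset.sum_le_sum fun i _ => lw_holder n _ _ (fun j => sq_nonneg _) (hb i)
      _ = ∑ i, ((∑ j, b i j) ^ 2) ^ ((1 : ℝ) / 3) * (√(∑ j, b i j ^ 2)) ^ ((2 : ℝ) / 3) := by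
          refine Finset.sum_congr rfl fun i _ => ?_
          have h0 : 0 ≤ ∑ j, b i j ^ 2 := by positivity
          rw [Real.sqrt_eq_rpow, ← Real.rpow_mul h0, ← Real.rpow_natCast, ← Real.rpow_mul (hS i),
            mul_comm]
          norm_num
      _ ≤ (∑ i, (∑ j, b i j) ^ 2) ^ ((1 : ℝ) / 3) * (∑ i, √(∑ j, b i j ^ 2)) ^ ((2 : ℝ) / 3) :=
          lw_holder n _ _ (fun i => sq_nonneg _) (fun i => Real.sqrt_nonneg _)
      _ ≤ (K ^ 2) ^ ((1 : ℝ) / 3) * K ^ ((2 : ℝ) / 3) := by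
          have := (lw_minkowski n b).trans (pow_le_pow_left₀ (by positivity) hC 2)
          gcongr
      _ = K ^ ((4 : ℝ) / 3) := by
          rw [← Real.rpow_natCast, ← Real.rpow_mul hK,
            ← Real.rpow_add_of_nonneg hK (by norm_num) (by norm_num)]
          norm_num
  have h0 : 0 ≤ ∑ i, ∑ j, b i j ^ ((4 : ℝ) / 3) :=
    Finset.sum_nonneg fun i _ => Finset.sum_nonneg fun j _ => Real.rpow_nonneg (hb i j) _
  calc _ ≤ (K ^ ((4 : ℝ) / 3)) ^ ((3 : ℝ) / 4) := by gcongr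
    _ = K := by rw [← Real.rpow_mul hK]; norm_num

lemma lw_expand (n : ℕ) (A : (Fin n → ℂ) →ₗ[ℂ] (Fin n → ℂ) →ₗ[ℂ] ℂ) (z w : Fin n → ℂ) :
    A z w = ∑ i, z i * ∑ j, A (Pi.single i 1) (Pi.single j 1) * w j := by
  conv_lhs => rw [pi_eq_sum_univ' z, pi_eq_sum_univ' w]
  simp only [map_sum, LinearMap.sum_apply, map_smul, LinearMap.smul_apply, smul_eq_mul,
    Finset.mul_sum]
  rw [Finset.sum_comm]
  refine Finset.sum_congr rfl fun i _ => Finset.sum_congr rfl fun j _ => ?_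
  ring

lemma lw_sup (n : ℕ) (A : (Fin n → ℂ) →ₗ[ℂ] (Fin n → ℂ) →ₗ[ℂ] ℂ) (z w : Fin n → ℂ)
    (hz : ∀ k, ‖z k‖ ≤ 1) (hw : ∀ k, ‖w k‖ ≤ 1) :
    ‖A z w‖ ≤ sSup {x : ℝ | ∃ z w : Fin n → ℂ,
          (∀ k, ‖z k‖ < 1) ∧ (∀ k, ‖w k‖ < 1) ∧ x = ‖A z w‖} := by
  set T := {x : ℝ | ∃ z w : Fin n → ℂ,
          (∀ k, ‖z k‖ < 1) ∧ (∀ k, ‖w k‖ < 1) ∧ x = ‖A z w‖} with hT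
  have hbdd : BddAbove T := by
    refine ⟨∑ i, 1 * ∑ j, ‖A (Pi.single i 1) (Pi.single j 1)‖ * 1, ?_⟩
    rintro x ⟨z, w, hz, hw, rfl⟩
    rw [lw_expand]
    refine (norm_sum_le _ _).trans (Finset.sum_le_sum fun i _ => ?_)
    rw [norm_mul]
    refine mul_le_mul (hz i).le ?_ (norm_nonneg _) zero_le_one
    refine (norm_sum_le _ _).trans (Finset.sum_le_sum fun j _ => ?_)
    rw [norm_mul]
    exact mul_le_mul_of_nonneg_left (hw j).le (norm_nonneg _)
  have hr : ∀ r : ℝ, r ∈ Set.Ioo (0 : ℝ) 1 → r * (r * ‖A z w‖) ≤ sSup T := by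
    rintro r ⟨h0, h1⟩
    have hlt : ∀ v : ℂ, ‖v‖ ≤ 1 → ‖(r : ℂ) * v‖ < 1 := fun v hv => by
      rw [norm_mul, Complex.norm_real, Real.norm_of_nonneg h0.le]
      nlinarith
    refine le_csSup hbdd ⟨(r : ℂ) • z, (r : ℂ) • w, fun k => hlt _ (hz k), fun k => hlt _ (hw k), ?_⟩
    simp [abs_of_pos h0]
  have hlim : Filter.Tendsto (fun r : ℝ => r * (r * ‖A z w‖)) (nhdsWithin 1 (Set.Iio 1))
      (nhds (1 * (1 * ‖A z w‖))) := by
    have : Continuous (fun r : ℝ => r * (r * ‖A z w‖)) := by fun_prop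
    exact (this.tendsto 1).mono_left nhdsWithin_le_nhds
  rw [one_mul, one_mul] at hlim
  refine le_of_tendsto hlim ?_
  filter_upwards [Ioo_mem_nhdsLT (zero_lt_one' ℝ)] with r h using hr r h

/-- Littlewood's 4/3 inequality for bilinear forms on `ℂ^n × ℂ^n`. -/
theorem littlewood_four_thirds (n : ℕ) (hn : 0 < n)
    (A : (Fin n → ℂ) →ₗ[ℂ] (Fin n → ℂ) →ₗ[ℂ] ℂ) :
    (∑ i : Fin n, ∑ j : Fin n,
        ‖A (Pi.single i 1) (Pi.single j 1)‖ ^ ((4 : ℝ) / 3)) ^ ((3 : ℝ) / 4)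
      ≤ Real.sqrt 2 *
        sSup {x : ℝ | ∃ z w : Fin n → ℂ,
          (∀ k, ‖z k‖ < 1) ∧ (∀ k, ‖w k‖ < 1) ∧ x = ‖A z w‖} := by
  refine lw_mix n (fun i j => ‖A (Pi.single i 1) (Pi.single j 1)‖) (fun _ _ => norm_nonneg _) _
    ?_ ?_
  · refine lw_avg n (fun i j => A (Pi.single i 1) (Pi.single j 1)) _ fun w hw => ?_
    refine lw_dual n _ _ fun z hz => ?_
    rw [← lw_expand]
    exact lw_sup n A z w hz hw
  · refine lw_avg n (fun j i => A (Pi.single i 1) (Pi.single j 1)) _ fun z hz => ?_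
    refine lw_dual n _ _ fun w hw => ?_
    have : ∑ j, w j * ∑ i, A (Pi.single i 1) (Pi.single j 1) * z i = A z w := by
      rw [lw_expand n A z w]
      simp only [Finset.mul_sum]
      rw [Finset.sum_comm]
      refine Finset.sum_congr rfl fun i _ => Finset.sum_congr rfl fun j _ => ?_
      ring
    rw [this]
    exact lw_sup n A z w hz hw
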